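/- Let m ≥ 1 and let A₁, …, A_m be real symmetric 3×3 matrices. Then (Σ_{r=1}^m ‖A_r‖²)² ≥ 2 Σ_{1≤r<s≤m} ‖[A_r,A_s]‖². (This is the DDVV inequality P(3,m).) -/

import Mathlib

open Matrix BigOperators

/-- Frobenius norm squared of a real `3 × 3` matrix: the sum of the squares of all entries. -/
noncomputable def frobSq (A : Matrix (Fin 3) (Fin 3) ℝ) : ℝ :=
  ∑ i, ∑ j, (A i j) ^ 2

/-- The commutator `[A, B] = A * B - B * A`. -/
def mcomm (A B : Matrix (Fin 3) (Fin 3) ℝ) : Matrix (Fin 3) (Fin 3) ℝ :=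
  A * B - B * A

open Finset in
/-- Layer-cake lemma. -/
lemma layer {ι : Type*} [DecidableEq ι] (K : ι → ι → ℝ) (hsym : ∀ i j, K i j = K j i)
    (hK : ∀ t : Finset ι, ∀ i ∈ t, ∑ j ∈ t, K i j ≤ (t.card : ℝ)) (n : ℕ) :
    ∀ (t : Finset ι) (x : ι → ℝ), t.card = n → (∀ i ∈ t, 0 ≤ x i) →
      ∑ i ∈ t, ∑ j ∈ t, x i * x j * K i j ≤ (∑ i ∈ t, x i) ^ 2 := by
  induction n with
  | zero =>
    intro t x ht _
    rw [Finset.card_eq_zero] at ht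
    subst ht
    simp
  | succ n ih =>
    intro t x ht hx
    have hne : t.Nonempty := by
      rw [← Finset.card_pos]; omega
    obtain ⟨i0, hi0, hmin⟩ := Finset.exists_min_image t x hne
    set μ := x i0 with hμ
    have hμ0 : 0 ≤ μ := hx i0 hi0
    have hih := ih (t.erase i0) (fun i => x i - μ) (by rw [Finset.card_erase_of_mem hi0]; omega)
      (fun i hi => sub_nonneg.2 (hmin i (Finset.mem_of_mem_erase hi)))
    have e1 : ∀ f : ι → ℝ, f i0 = 0 → ∑ i ∈ t.erase i0, f i = ∑ i ∈ t, f i := by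
      intro f hf
      rw [← Finset.add_sum_erase t f hi0, hf, zero_add]
    rw [e1 (fun i => x i - μ) (by simp [hμ])] at hih
    have e2 : ∑ i ∈ t.erase i0, ∑ j ∈ t.erase i0, (x i - μ) * (x j - μ) * K i j
        = ∑ i ∈ t, ∑ j ∈ t, (x i - μ) * (x j - μ) * K i j := by
      rw [← e1 (fun i => ∑ j ∈ t, (x i - μ) * (x j - μ) * K i j) (by simp [hμ])]
      refine Finset.sum_congr rfl fun i _ => ?_
      exact e1 (fun j => (x i - μ) * (x j - μ) * K i j) (by simp [hμ])
    rw [e2] at hih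
    have h1 : ∑ i ∈ t, (x i - μ) * ∑ j ∈ t, K i j ≤ ∑ i ∈ t, (x i - μ) * (t.card : ℝ) :=
      Finset.sum_le_sum fun i hi =>
        mul_le_mul_of_nonneg_left (hK t i hi) (sub_nonneg.2 (hmin i hi))
    have h2 : ∑ i ∈ t, ∑ j ∈ t, K i j ≤ (t.card : ℝ) * t.card := by
      calc ∑ i ∈ t, ∑ j ∈ t, K i j ≤ ∑ i ∈ t, (t.card : ℝ) :=
            Finset.sum_le_sum fun i hi => hK t i hi
        _ = _ := by simp
    have h3 : ∑ i ∈ t, ∑ j ∈ t, (x j - μ) * K i j = ∑ i ∈ t, (x i - μ) * ∑ j ∈ t, K i j := by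
      rw [Finset.sum_comm]
      refine Finset.sum_congr rfl fun i _ => ?_
      rw [Finset.mul_sum]
      exact Finset.sum_congr rfl fun j _ => by rw [hsym]
    have h4 : ∑ i ∈ t, ∑ j ∈ t, x i * x j * K i j
        = ∑ i ∈ t, ∑ j ∈ t, (x i - μ) * (x j - μ) * K i j
          + μ * ∑ i ∈ t, (x i - μ) * ∑ j ∈ t, K i j
          + μ * ∑ i ∈ t, ∑ j ∈ t, (x j - μ) * K i j + μ ^ 2 * ∑ i ∈ t, ∑ j ∈ t, K i j := by
      simp only [Finset.mul_sum, ← Finset.sum_add_distrib]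
      exact Finset.sum_congr rfl fun i _ => Finset.sum_congr rfl fun j _ => by ring
    have h5 : ∑ i ∈ t, x i = ∑ i ∈ t, (x i - μ) + t.card * μ := by
      simp [Finset.sum_sub_distrib]
    rw [h4, h3, h5]
    rw [← Finset.sum_mul] at h1
    have := mul_le_mul_of_nonneg_left h1 hμ0
    have := mul_le_mul_of_nonneg_left h2 (sq_nonneg μ)
    nlinarith

/-- Frobenius inner product. -/
noncomputable def ip (A B : Matrix (Fin 3) (Fin 3) ℝ) : ℝ := ∑ i, ∑ j, A i j * B i j

lemma ip_self (A : Matrix (Fin 3) (Fin 3) ℝ) : ip A A = frobSq A := by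
  simp [ip, frobSq, sq]

lemma ip_comm (A B : Matrix (Fin 3) (Fin 3) ℝ) : ip A B = ip B A := by
  simp [ip, mul_comm]

lemma frobSq_nonneg (A : Matrix (Fin 3) (Fin 3) ℝ) : 0 ≤ frobSq A := by
  unfold frobSq; positivity

lemma frobSq_smul (c : ℝ) (A : Matrix (Fin 3) (Fin 3) ℝ) : frobSq (c • A) = c ^ 2 * frobSq A := by
  simp [frobSq, Finset.mul_sum, mul_pow]

lemma ip_smul_left (c : ℝ) (A B : Matrix (Fin 3) (Fin 3) ℝ) : ip (c • A) B = c * ip A B := by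
  simp [ip, Finset.mul_sum, mul_assoc]

lemma ip_smul_right (c : ℝ) (A B : Matrix (Fin 3) (Fin 3) ℝ) : ip A (c • B) = c * ip A B := by
  rw [ip_comm, ip_smul_left, ip_comm]

lemma ip_sum_left {ι : Type*} (t : Finset ι) (E : ι → Matrix (Fin 3) (Fin 3) ℝ)
    (X : Matrix (Fin 3) (Fin 3) ℝ) : ip (∑ j ∈ t, E j) X = ∑ j ∈ t, ip (E j) X := by
  classical
  induction t using Finset.induction_on with
  | empty => simp [ip]
  | insert a s ha ih =>
    rw [Finset.sum_insert ha, Finset.sum_insert ha, ← ih]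
    simp [ip, add_mul, Finset.sum_add_distrib]

lemma frobSq_eq_zero {A : Matrix (Fin 3) (Fin 3) ℝ} (h : frobSq A = 0) : A = 0 := by
  unfold frobSq at h
  ext i j
  rw [Finset.sum_eq_zero_iff_of_nonneg (fun i _ => by positivity)] at h
  have h1 := h i (Finset.mem_univ _)
  rw [Finset.sum_eq_zero_iff_of_nonneg (fun i _ => by positivity)] at h1
  simpa using h1 j (Finset.mem_univ _)

lemma ip_cauchy (A B : Matrix (Fin 3) (Fin 3) ℝ) : ip A B ^ 2 ≤ frobSq A * frobSq B := by
  have := Finset.sum_mul_sq_le_sq_mul_sq (Finset.univ : Finset (Fin 3 × Fin 3))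
    (fun p => A p.1 p.2) (fun p => B p.1 p.2)
  simpa only [ip, frobSq, Fintype.sum_prod_type] using this

lemma bessel {ι : Type*} [DecidableEq ι] (E : ι → Matrix (Fin 3) (Fin 3) ℝ)
    (hort : ∀ i j, i ≠ j → ip (E i) (E j) = 0) (hn : ∀ i, frobSq (E i) ≤ 1)
    (X : Matrix (Fin 3) (Fin 3) ℝ) (t : Finset ι) :
    ∑ j ∈ t, ip (E j) X ^ 2 ≤ frobSq X := by
  set Y := ∑ j ∈ t, ip (E j) X • E j with hY
  have h1 : ip Y X = ∑ j ∈ t, ip (E j) X ^ 2 := by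
    rw [hY, ip_sum_left]
    exact Finset.sum_congr rfl fun j _ => by rw [ip_smul_left, sq]
  have h2 : ip Y Y ≤ ∑ j ∈ t, ip (E j) X ^ 2 := by
    nth_rw 1 [hY]
    rw [ip_sum_left]
    refine Finset.sum_le_sum fun j hj => ?_
    rw [ip_smul_left, ip_comm (E j) Y, hY, ip_sum_left, Finset.sum_eq_single j]
    · rw [ip_smul_left, ip_self]
      nlinarith [hn j, sq_nonneg (ip (E j) X)]
    · intro i _ hij
      rw [ip_smul_left, hort i j hij, mul_zero]
    · intro h; exact absurd hj h
  have h3 : frobSq (X - Y) = frobSq X - 2 * ip Y X + ip Y Y := by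
    simp only [frobSq, ip, Fin.sum_univ_three, Matrix.sub_apply]
    ring
  have := frobSq_nonneg (X - Y)
  linarith

/-- Antisymmetric matrix attached to a vector. -/
def asym (a b c : ℝ) : Matrix (Fin 3) (Fin 3) ℝ := !![0, a, b; -a, 0, c; -b, -c, 0]

lemma symm_entries {A : Matrix (Fin 3) (Fin 3) ℝ} (hA : A.IsSymm) :
    A 1 0 = A 0 1 ∧ A 2 0 = A 0 2 ∧ A 2 1 = A 1 2 :=
  ⟨hA.apply 0 1, hA.apply 0 2, hA.apply 1 2⟩

lemma ip_asym {A B : Matrix (Fin 3) (Fin 3) ℝ} (hA : A.IsSymm) (hB : B.IsSymm) (a b c : ℝ) :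
    ip B (mcomm A (asym a b c)) =
      2 * (a * mcomm A B 0 1 + b * mcomm A B 0 2 + c * mcomm A B 1 2) := by
  obtain ⟨h1, h2, h3⟩ := symm_entries hA
  obtain ⟨k1, k2, k3⟩ := symm_entries hB
  simp [ip, mcomm, asym, Matrix.mul_apply, Matrix.vecMul, dotProduct, Fin.sum_univ_three, h1, h2, h3, k1, k2, k3]
  ring

lemma frobSq_mcomm {A B : Matrix (Fin 3) (Fin 3) ℝ} (hA : A.IsSymm) (hB : B.IsSymm) :
    frobSq (mcomm A B) =
      2 * (mcomm A B 0 1 ^ 2 + mcomm A B 0 2 ^ 2 + mcomm A B 1 2 ^ 2) := by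
  obtain ⟨h1, h2, h3⟩ := symm_entries hA
  obtain ⟨k1, k2, k3⟩ := symm_entries hB
  simp [frobSq, mcomm, Matrix.mul_apply, Fin.sum_univ_three, h1, h2, h3, k1, k2, k3]
  ring

lemma asym_bound {A : Matrix (Fin 3) (Fin 3) ℝ} (hA : A.IsSymm) (a b c : ℝ) :
    frobSq (mcomm A (asym a b c)) ≤ 4 * frobSq A * (a ^ 2 + b ^ 2 + c ^ 2) := by
  obtain ⟨h1, h2, h3⟩ := symm_entries hA
  have key : 4 * frobSq A * (a ^ 2 + b ^ 2 + c ^ 2) - frobSq (mcomm A (asym a b c))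
      = frobSq (A * asym a b c + asym a b c * A)
        + 4 * ((A 0 0 * c - A 0 1 * b + A 0 2 * a) ^ 2 + (A 0 1 * c - A 1 1 * b + A 1 2 * a) ^ 2
          + (A 0 2 * c - A 1 2 * b + A 2 2 * a) ^ 2) := by
    simp [frobSq, mcomm, asym, Matrix.mul_apply, Matrix.vecMul, dotProduct, Fin.sum_univ_three, h1, h2, h3]
    ring
  have := frobSq_nonneg (A * asym a b c + asym a b c * A)
  nlinarith [sq_nonneg (A 0 0 * c - A 0 1 * b + A 0 2 * a),
    sq_nonneg (A 0 1 * c - A 1 1 * b + A 1 2 * a), sq_nonneg (A 0 2 * c - A 1 2 * b + A 2 2 * a)]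

lemma pair_bound {A B : Matrix (Fin 3) (Fin 3) ℝ} (hA : A.IsSymm) (hB : B.IsSymm) :
    frobSq (mcomm A B) ≤ 2 * frobSq A * frobSq B := by
  rw [frobSq_mcomm hA hB]
  set a := mcomm A B 0 1
  set b := mcomm A B 0 2
  set c := mcomm A B 1 2
  have h1 : ip B (mcomm A (asym a b c)) = 2 * (a * a + b * b + c * c) := ip_asym hA hB a b c
  have h2 := ip_cauchy B (mcomm A (asym a b c))
  have h3 := mul_le_mul_of_nonneg_left (asym_bound hA a b c) (frobSq_nonneg B)
  have hab := mul_nonneg (frobSq_nonneg A) (frobSq_nonneg B)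
  rw [h1] at h2
  have h0 : 0 ≤ a ^ 2 + b ^ 2 + c ^ 2 := by positivity
  rcases h0.eq_or_lt with h | h
  · rw [← h]; linarith
  · have : (a ^ 2 + b ^ 2 + c ^ 2) * (a ^ 2 + b ^ 2 + c ^ 2)
      ≤ (a ^ 2 + b ^ 2 + c ^ 2) * (frobSq A * frobSq B) := by nlinarith
    have := le_of_mul_le_mul_left this h
    linarith

lemma trace_bound {A : Matrix (Fin 3) (Fin 3) ℝ} (hA : A.IsSymm) :
    frobSq (mcomm A (asym 1 0 0)) + frobSq (mcomm A (asym 0 1 0)) + frobSq (mcomm A (asym 0 0 1))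
      ≤ 6 * frobSq A := by
  obtain ⟨h1, h2, h3⟩ := symm_entries hA
  have key : 6 * frobSq A - (frobSq (mcomm A (asym 1 0 0)) + frobSq (mcomm A (asym 0 1 0))
      + frobSq (mcomm A (asym 0 0 1))) = 2 * (A 0 0 + A 1 1 + A 2 2) ^ 2 := by
    simp [frobSq, mcomm, asym, Matrix.mul_apply, Matrix.vecMul, dotProduct, Fin.sum_univ_three, h1, h2, h3]
    ring
  nlinarith [sq_nonneg (A 0 0 + A 1 1 + A 2 2)]

lemma mcomm_self (A : Matrix (Fin 3) (Fin 3) ℝ) : mcomm A A = 0 := by simp [mcomm]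

lemma frobSq_zero : frobSq 0 = 0 := by simp [frobSq]

lemma mcomm_swap (A B : Matrix (Fin 3) (Fin 3) ℝ) :
    frobSq (mcomm A B) = frobSq (mcomm B A) := by
  have : mcomm A B = (-1 : ℝ) • mcomm B A := by simp [mcomm]
  rw [this, frobSq_smul]; norm_num

lemma row_bound {ι : Type*} [DecidableEq ι] (E : ι → Matrix (Fin 3) (Fin 3) ℝ)
    (hs : ∀ i, (E i).IsSymm)
    (hort : ∀ i j, i ≠ j → ip (E i) (E j) = 0) (hn : ∀ i, frobSq (E i) ≤ 1)
    (t : Finset ι) (i : ι) (hi : i ∈ t) :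
    ∑ j ∈ t, frobSq (mcomm (E i) (E j)) ≤ (t.card : ℝ) := by
  by_cases h3 : 3 ≤ t.card
  · have h3' : (3 : ℝ) ≤ t.card := by exact_mod_cast h3
    refine le_trans ?_ h3'
    have e : ∀ j, frobSq (mcomm (E i) (E j)) = (1 / 2) * (ip (E j) (mcomm (E i) (asym 1 0 0)) ^ 2
        + ip (E j) (mcomm (E i) (asym 0 1 0)) ^ 2 + ip (E j) (mcomm (E i) (asym 0 0 1)) ^ 2) := by
      intro j
      rw [frobSq_mcomm (hs i) (hs j), ip_asym (hs i) (hs j), ip_asym (hs i) (hs j),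
        ip_asym (hs i) (hs j)]
      ring
    simp only [e, ← Finset.mul_sum, Finset.sum_add_distrib]
    have b1 := bessel E hort hn (mcomm (E i) (asym 1 0 0)) t
    have b2 := bessel E hort hn (mcomm (E i) (asym 0 1 0)) t
    have b3 := bessel E hort hn (mcomm (E i) (asym 0 0 1)) t
    have := trace_bound (hs i)
    have := hn i
    linarith
  · rw [← Finset.add_sum_erase t _ hi, mcomm_self, frobSq_zero, zero_add]
    have hc := Finset.card_erase_of_mem hi
    have hp : 0 < t.card := Finset.card_pos.2 ⟨i, hi⟩
    have hb : ∑ j ∈ t.erase i, frobSq (mcomm (E i) (E j)) ≤ ∑ j ∈ t.erase i, (2 : ℝ) := by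
      refine Finset.sum_le_sum fun j _ => ?_
      have := pair_bound (hs i) (hs j)
      nlinarith [hn i, hn j, frobSq_nonneg (E i), frobSq_nonneg (E j)]
    refine hb.trans ?_
    rw [Finset.sum_const, hc, nsmul_eq_mul]
    have : t.card = 1 ∨ t.card = 2 := by omega
    rcases this with h | h <;> rw [h] <;> norm_num

lemma ddvv_orth {m : ℕ} (B : Fin m → Matrix (Fin 3) (Fin 3) ℝ) (hs : ∀ i, (B i).IsSymm)
    (hort : ∀ i j, i ≠ j → ip (B i) (B j) = 0) :
    ∑ i, ∑ j, frobSq (mcomm (B i) (B j)) ≤ (∑ i, frobSq (B i)) ^ 2 := by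
  set E : Fin m → Matrix (Fin 3) (Fin 3) ℝ := fun i => (Real.sqrt (frobSq (B i)))⁻¹ • B i with hE
  have hsq : ∀ i, Real.sqrt (frobSq (B i)) ^ 2 = frobSq (B i) :=
    fun i => Real.sq_sqrt (frobSq_nonneg _)
  have hEs : ∀ i, (E i).IsSymm := fun i => (hs i).smul _
  have hEo : ∀ i j, i ≠ j → ip (E i) (E j) = 0 := by
    intro i j hij
    simp only [hE]
    rw [ip_smul_left, ip_smul_right, hort i j hij]; simp
  have hEn : ∀ i, frobSq (E i) ≤ 1 := by
    intro i
    simp only [hE]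
    rw [frobSq_smul, inv_pow, hsq]
    exact inv_mul_le_one
  have hBE : ∀ i, B i = Real.sqrt (frobSq (B i)) • E i := by
    intro i
    by_cases h : frobSq (B i) = 0
    · rw [h, frobSq_eq_zero h]; simp
    · have : Real.sqrt (frobSq (B i)) ≠ 0 := by
        intro h0; apply h; rw [← hsq, h0]; norm_num
      simp only [hE]
      rw [smul_smul, mul_inv_cancel₀ this, one_smul]
  have hc : ∀ i j, frobSq (mcomm (B i) (B j))
      = frobSq (B i) * frobSq (B j) * frobSq (mcomm (E i) (E j)) := by
    intro i j
    have : mcomm (B i) (B j) = (Real.sqrt (frobSq (B i)) * Real.sqrt (frobSq (B j))) •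
        mcomm (E i) (E j) := by
      conv_lhs => rw [hBE i, hBE j]
      simp only [mcomm, smul_mul_smul_comm, smul_sub]
      rw [mul_comm (Real.sqrt (frobSq (B j)))]
    rw [this, frobSq_smul, mul_pow, hsq, hsq]
  simp only [hc]
  exact layer (fun i j => frobSq (mcomm (E i) (E j))) (fun i j => mcomm_swap _ _)
    (fun t i hi => row_bound E hEs hEo hEn t i hi) _ Finset.univ (fun i => frobSq (B i)) rfl
    (fun i _ => frobSq_nonneg _)

lemma sum_sq_eq_trace {m : ℕ} (M : Matrix (Fin m) (Fin m) ℝ) :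
    ∑ k, ∑ l, M k l ^ 2 = (M * Mᵀ).trace := by
  simp [Matrix.trace, Matrix.mul_apply, sq]

lemma sum_sq_conj {m : ℕ} (U M : Matrix (Fin m) (Fin m) ℝ) (hU : U * Uᵀ = 1) :
    ∑ k, ∑ l, (Uᵀ * M * U) k l ^ 2 = ∑ k, ∑ l, M k l ^ 2 := by
  rw [sum_sq_eq_trace, sum_sq_eq_trace]
  have : (Uᵀ * M * U) * (Uᵀ * M * U)ᵀ = Uᵀ * (M * Mᵀ * U) := by
    simp only [Matrix.transpose_mul, Matrix.transpose_transpose]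
    calc Uᵀ * M * U * (Uᵀ * (Mᵀ * U)) = Uᵀ * M * (U * Uᵀ) * (Mᵀ * U) := by
          simp only [Matrix.mul_assoc]
      _ = _ := by rw [hU]; simp only [Matrix.mul_assoc, Matrix.mul_one]
  rw [this, Matrix.trace_mul_comm, Matrix.mul_assoc, hU, Matrix.mul_one]

lemma conj_apply {m : ℕ} (U M : Matrix (Fin m) (Fin m) ℝ) (k l : Fin m) :
    (Uᵀ * M * U) k l = ∑ s, ∑ r, U r k * M r s * U s l := by
  simp [Matrix.mul_apply, Finset.sum_mul]

lemma sum_sq_rot {m : ℕ} (U : Matrix (Fin m) (Fin m) ℝ) (hU : U * Uᵀ = 1) (a : Fin m → ℝ) :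
    ∑ k, (∑ r, U r k * a r) ^ 2 = ∑ r, a r ^ 2 := by
  have h : (Uᵀ *ᵥ a) ⬝ᵥ (Uᵀ *ᵥ a) = a ⬝ᵥ a := by
    rw [Matrix.dotProduct_mulVec, Matrix.vecMul_transpose, Matrix.mulVec_mulVec, hU,
      Matrix.one_mulVec]
  simpa [dotProduct, Matrix.mulVec, sq] using h

/-- P(3,m): for real symmetric `3 × 3` matrices `A₁, …, A_m`,
`(Σ_r ‖A_r‖²)² ≥ 2 Σ_{r<s} ‖[A_r, A_s]‖²`. -/
theorem ddvv_P_3_m (m : ℕ) (hm : 1 ≤ m) (A : Fin m → Matrix (Fin 3) (Fin 3) ℝ)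
    (hA : ∀ r, (A r).IsSymm) :
    (∑ r, frobSq (A r)) ^ 2 ≥
      2 * ∑ r, ∑ s, (if r < s then frobSq (mcomm (A r) (A s)) else 0) := by
  have hG : (Matrix.of fun r s => ip (A r) (A s) : Matrix (Fin m) (Fin m) ℝ).IsHermitian := by
    ext r s
    simp [ip_comm]
  set G : Matrix (Fin m) (Fin m) ℝ := Matrix.of fun r s => ip (A r) (A s) with hGdef
  obtain ⟨U, hU, d, hd⟩ : ∃ U : Matrix (Fin m) (Fin m) ℝ, U * Uᵀ = 1 ∧
      ∃ d : Fin m → ℝ, Uᵀ * G * U = Matrix.diagonal d := by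
    refine ⟨hG.eigenvectorUnitary, ?_, hG.eigenvalues, ?_⟩
    · have := Unitary.coe_mul_star_self hG.eigenvectorUnitary
      rwa [Unitary.coe_star, Matrix.star_eq_conjTranspose, Matrix.conjTranspose_eq_transpose_of_trivial] at this
    · have := hG.conjStarAlgAut_star_eigenvectorUnitary
      rw [Unitary.conjStarAlgAut_star_apply, Matrix.star_eq_conjTranspose,
        Matrix.conjTranspose_eq_transpose_of_trivial] at this
      exact this
  set B : Fin m → Matrix (Fin 3) (Fin 3) ℝ := fun k => ∑ r, U r k • A r with hB
  have hBs : ∀ k, (B k).IsSymm := by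
    intro k
    simp only [hB, Matrix.IsSymm, Matrix.transpose_sum, Matrix.transpose_smul]
    exact Finset.sum_congr rfl fun r _ => by rw [hA r]
  have hBip : ∀ k l, ip (B k) (B l) = (Uᵀ * G * U) k l := by
    intro k l
    rw [conj_apply, Finset.sum_comm]
    simp only [hB]
    rw [ip_sum_left]
    refine Finset.sum_congr rfl fun r _ => ?_
    rw [ip_smul_left, ip_comm (A r), ip_sum_left, Finset.mul_sum]
    refine Finset.sum_congr rfl fun s _ => ?_
    rw [ip_smul_left, ip_comm]
    simp only [hGdef, Matrix.of_apply]
    ring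
  have hBo : ∀ k l, k ≠ l → ip (B k) (B l) = 0 := by
    intro k l h
    rw [hBip, hd, Matrix.diagonal_apply_ne _ h]
  have main := ddvv_orth B hBs hBo
  have reorder1 : ∀ C : Fin m → Matrix (Fin 3) (Fin 3) ℝ,
      ∑ k, frobSq (C k) = ∑ i, ∑ j, ∑ k, C k i j ^ 2 := by
    intro C
    simp only [frobSq, Fin.sum_univ_three, Finset.sum_add_distrib]
  have n1 : ∑ k, frobSq (B k) = ∑ r, frobSq (A r) := by
    rw [reorder1 B, reorder1 A]
    refine Finset.sum_congr rfl fun i _ => Finset.sum_congr rfl fun j _ => ?_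
    refine Eq.trans ?_ (sum_sq_rot U hU (fun r => A r i j))
    refine Finset.sum_congr rfl fun k _ => ?_
    simp [hB, Matrix.sum_apply]
  have reorder : ∀ C : Fin m → Fin m → Matrix (Fin 3) (Fin 3) ℝ,
      ∑ k, ∑ l, frobSq (C k l) = ∑ i, ∑ j, ∑ k, ∑ l, C k l i j ^ 2 := by
    intro C
    simp only [frobSq, Fin.sum_univ_three, Finset.sum_add_distrib]
  have n2 : ∑ k, ∑ l, frobSq (mcomm (B k) (B l)) = ∑ r, ∑ s, frobSq (mcomm (A r) (A s)) := by
    rw [reorder (fun k l => mcomm (B k) (B l)), reorder (fun k l => mcomm (A k) (A l))]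
    refine Finset.sum_congr rfl fun i _ => Finset.sum_congr rfl fun j _ => ?_
    refine Eq.trans ?_ (sum_sq_conj U (Matrix.of fun r s => mcomm (A r) (A s) i j) hU)
    refine Finset.sum_congr rfl fun k _ => Finset.sum_congr rfl fun l _ => ?_
    congr 1
    rw [conj_apply]
    have : mcomm (B k) (B l) = ∑ s, ∑ r, (U r k * U s l) • mcomm (A r) (A s) := by
      simp only [hB, mcomm, smul_sub, Finset.sum_sub_distrib]
      congr 1
      · rw [Finset.sum_mul_sum, Finset.sum_comm]
        simp only [smul_mul_smul_comm]
      · rw [Finset.sum_mul_sum]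
        simp only [smul_mul_smul_comm, mul_comm]
    rw [this]
    simp only [Matrix.sum_apply, Matrix.smul_apply, Matrix.of_apply, smul_eq_mul]
    exact Finset.sum_congr rfl fun s _ => Finset.sum_congr rfl fun r _ => by ring
  rw [n1, n2] at main
  have n3 : ∑ r, ∑ s, frobSq (mcomm (A r) (A s))
      = 2 * ∑ r, ∑ s, (if r < s then frobSq (mcomm (A r) (A s)) else 0) := by
    have : ∑ r, ∑ s, (if r < s then frobSq (mcomm (A r) (A s)) else 0)
        = ∑ r, ∑ s, (if s < r then frobSq (mcomm (A r) (A s)) else 0) := by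
      rw [Finset.sum_comm]
      refine Finset.sum_congr rfl fun r _ => Finset.sum_congr rfl fun s _ => ?_
      rw [mcomm_swap]
    rw [two_mul]
    nth_rw 2 [this]
    simp only [← Finset.sum_add_distrib]
    refine Finset.sum_congr rfl fun r _ => Finset.sum_congr rfl fun s _ => ?_
    rcases lt_trichotomy r s with h | h | h
    · simp [h, h.not_gt]
    · subst h; simp [mcomm_self, frobSq_zero]
    · simp [h, h.not_gt]
  rw [← n3]
  exact main
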